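/- In every C_k-algebra (A, t), for all a, b, c ∈ A one has a ⇁ (b ⇁ c) = (a ⇁ b) ⇁ (a ⇁ c). -/

import Mathlib

universe u

/-- Modal pseudocomplemented De Morgan algebra (mpM-algebra). -/
class MpM (A : Type u) extends DistribLattice A, BoundedOrder A where
  dm : A → A   -- De Morgan negation ∼
  ps : A → A   -- pseudocomplement *
  dm_dm : ∀ x : A, dm (dm x) = x
  dm_sup : ∀ x y : A, dm (x ⊔ y) = dm x ⊓ dm y
  pseudo : ∀ a x : A, a ⊓ x = ⊥ ↔ x ≤ ps a
  modal : ∀ x : A, x ⊔ dm x ≤ x ⊔ ps x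

open MpM

variable {A : Type u} [MpM A]

/-- ∇x = ∼(∼x ∧ x*) -/
def nabla (x : A) : A := dm (dm x ⊓ ps x)

/-- △x = ∼∇∼x -/
def tri (x : A) : A := dm (nabla (dm x))

/-- A C_k-algebra structure on an mpM-algebra `A`: an automorphism `t` with `t^k = id`. -/
structure CkStr (A : Type u) [MpM A] (k : ℕ) where
  t : A → A
  bij : Function.Bijective t
  map_inf : ∀ x y : A, t (x ⊓ y) = t x ⊓ t y
  map_sup : ∀ x y : A, t (x ⊔ y) = t x ⊔ t y
  map_dm : ∀ x : A, t (dm x) = dm (t x)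
  map_ps : ∀ x : A, t (ps x) = ps (t x)
  map_bot : t (⊥ : A) = ⊥
  map_top : t (⊤ : A) = ⊤
  periodic : ∀ x : A, t^[k] x = x

/-- Lattice filter: nonempty, upward closed, closed under binary meets. -/
def IsLatFilter (F : Set A) : Prop :=
  F.Nonempty ∧ (∀ x ∈ F, ∀ y : A, x ≤ y → y ∈ F) ∧ ∀ x ∈ F, ∀ y ∈ F, x ⊓ y ∈ F

/-- c-filter: a filter closed under △ and t. -/
def IsCFilter {k : ℕ} (T : CkStr A k) (F : Set A) : Prop :=
  IsLatFilter F ∧ ∀ x ∈ F, tri x ∈ F ∧ T.t x ∈ F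

/-- maximal c-filter: proper and not properly contained in a proper c-filter. -/
def IsMaxCFilter {k : ℕ} (T : CkStr A k) (N : Set A) : Prop :=
  IsCFilter T N ∧ N ≠ Set.univ ∧
    ∀ G : Set A, IsCFilter T G → G ≠ Set.univ → N ⊆ G → N = G

/-- prime filter -/
def IsPrimeFilter (P : Set A) : Prop :=
  IsLatFilter P ∧ P ≠ Set.univ ∧ ∀ x y : A, x ⊔ y ∈ P → x ∈ P ∨ y ∈ P

/-- ultrafilter: maximal proper (lattice) filter -/
def IsUltraFilter (U : Set A) : Prop :=
  IsLatFilter U ∧ U ≠ Set.univ ∧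
    ∀ G : Set A, IsLatFilter G → G ≠ Set.univ → U ⊆ G → U = G

/-- Birula–Rasiowa transformation φ(P) = A \ {∼x : x ∈ P}. -/
def brPhi (P : Set A) : Set A := Set.univ \ (dm '' P)

/-- a ⇁ b = (⋁_{i=1}^{k} ∇(∼ t^i(a))) ∨ b -/
def rimp {k : ℕ} (T : CkStr A k) (a b : A) : A :=
  ((Finset.Icc 1 k).sup fun i => nabla (dm (T.t^[i] a))) ⊔ b

/-- cyclic deductive system -/
def IsCDS {k : ℕ} (T : CkStr A k) (D : Set A) : Prop :=
  (⊤ : A) ∈ D ∧ ∀ x ∈ D, ∀ y : A, rimp T x y ∈ D → y ∈ D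

/-- maximal cyclic deductive system -/
def IsMaxCDS {k : ℕ} (T : CkStr A k) (M : Set A) : Prop :=
  IsCDS T M ∧ M ≠ Set.univ ∧
    ∀ G : Set A, IsCDS T G → G ≠ Set.univ → M ⊆ G → M = G

/-- the smallest cyclic deductive system containing `X` -/
def genCDS {k : ℕ} (T : CkStr A k) (X : Set A) : Set A :=
  ⋂₀ {D : Set A | IsCDS T D ∧ X ⊆ D}

/-- K(A) = {x : t(x) = x and ∇x = x} -/
def Kset {k : ℕ} (T : CkStr A k) : Set A := {x : A | T.t x = x ∧ nabla x = x}

/-- consistency operator ∘x = ⋀_{i=0}^{k} t^i((∼x ∨ x) ∧ (x ∧ ∼x)*) -/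
def cCirc {k : ℕ} (T : CkStr A k) (x : A) : A :=
  (Finset.Icc 0 k).inf fun i => T.t^[i] ((dm x ⊔ x) ⊓ ps (x ⊓ dm x))

/-- x → y = ∼((∼(x∨y))* ∧ (x∨y)) ∨ ((∼(x∧y))* ∧ (x∧y)) -/
def mpTo (x y : A) : A :=
  dm (ps (dm (x ⊔ y)) ⊓ (x ⊔ y)) ⊔ (ps (dm (x ⊓ y)) ⊓ (x ⊓ y))

/-- x ⇒ y = (x → y) ∧ (∼y → ∼x) -/
def mpIff (x y : A) : A := mpTo x y ⊓ mpTo (dm y) (dm x)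

/-!
In an mpM-algebra `∼∇x` is a complement of `∇x`. Hence `¬a = ⋁ᵢ ∇∼tⁱ(a)` is complemented by `∼¬a`;
it is also fixed by `t`, which permutes the terms cyclically. Since `∇(e ∧ x) = e ∧ ∇x` whenever
`∼e` is a complement of `e`, this gives `¬(¬a ∨ b) = ∼¬a ∧ ¬b`. As `a ⇁ b = ¬a ∨ b`, it only remains
to expand `(∼¬a ∧ ¬b) ∨ (¬a ∨ c)` using `∼¬a ∨ ¬a = 1`.
-/

theorem sup_Icc_one_comp_add_one {α : Type*} [SemilatticeSup α] [OrderBot α] {f : ℕ → α} {k : ℕ}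
    (h : f (k + 1) = f 1) : ((Finset.Icc 1 k).sup fun i => f (i + 1)) = (Finset.Icc 1 k).sup f := by
  obtain _ | k := k
  · rfl
  calc ((Finset.Icc 1 (k + 1)).sup fun i => f (i + 1))
      = ((Finset.Icc 1 k).sup fun i => f (i + 1)) ⊔ f 1 := by
        rw [← h, ← Finset.insert_Icc_right_eq_Icc_add_one (by lia), Finset.sup_insert, sup_comm]
    _ = (Finset.Icc (1 + 1) (k + 1)).sup f ⊔ f 1 := by
        rw [← Finset.image_add_right_Icc, Finset.sup_image]
        rfl
    _ = (Finset.Icc 1 (k + 1)).sup f := by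
        rw [sup_comm, ← Finset.sup_insert, Finset.insert_Icc_add_one_left_eq_Icc (by lia)]

namespace MpM

theorem dm_inf (x y : A) : dm (x ⊓ y) = dm x ⊔ dm y := by
  rw [← dm_dm (dm x ⊔ dm y), dm_sup, dm_dm, dm_dm]

theorem dm_antitone : Antitone (dm : A → A) := fun x y h => by
  rw [← sup_eq_right.mpr h, dm_sup]
  exact inf_le_left

theorem dm_bot : dm (⊥ : A) = ⊤ :=
  top_unique <| by simpa only [dm_dm] using dm_antitone (bot_le : ⊥ ≤ dm (⊤ : A))

theorem isCompl_dm_of_disjoint {x : A} (h : Disjoint x (dm x)) : IsCompl x (dm x) := by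
  refine ⟨h, codisjoint_iff.mpr ?_⟩
  rw [sup_comm, ← dm_bot, ← h.eq_bot, dm_inf, dm_dm]

theorem isCompl_dm_dm {x : A} (h : IsCompl x (dm x)) : IsCompl (dm x) (dm (dm x)) := by
  rw [dm_dm]
  exact h.symm

theorem isCompl_dm_finset_sup {ι : Type*} {s : Finset ι} {f : ι → A}
    (h : ∀ i ∈ s, IsCompl (f i) (dm (f i))) : IsCompl (s.sup f) (dm (s.sup f)) := by
  refine Finset.sup_induction (p := fun x => IsCompl x (dm x)) ?_ (fun x hx y hy => ?_) h
  · rw [dm_bot]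
    exact isCompl_bot_top
  · rw [dm_sup]
    exact hx.sup_inf hy

theorem disjoint_ps (x : A) : Disjoint x (ps x) :=
  disjoint_iff.mpr ((pseudo x (ps x)).mpr le_rfl)

theorem ps_inf_of_isCompl {e e' : A} (h : IsCompl e e') (x : A) : ps (e ⊓ x) = e' ⊔ ps x := by
  refine eq_of_forall_le_iff fun y => ?_
  rw [sup_comm, h.le_sup_right_iff_inf_left_le, ← pseudo, ← pseudo, inf_comm y, inf_left_comm,
    inf_assoc]

theorem dm_inf_dm_ps_le (x : A) : dm x ⊓ dm (ps x) ≤ x :=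
  calc dm x ⊓ dm (ps x) = dm (x ⊔ ps x) := (dm_sup x (ps x)).symm
    _ ≤ dm (x ⊔ dm x) := dm_antitone (modal x)
    _ = dm x ⊓ x := by rw [dm_sup, dm_dm]
    _ ≤ x := inf_le_right

theorem nabla_eq_sup (x : A) : nabla x = x ⊔ dm (ps x) := by
  rw [nabla, dm_inf, dm_dm]

theorem nabla_inf_dm_le (x : A) : nabla x ⊓ dm x ≤ x := by
  rw [nabla_eq_sup, inf_sup_right, inf_comm (dm (ps x))]
  exact sup_le inf_le_left (dm_inf_dm_ps_le x)

theorem isCompl_nabla (x : A) : IsCompl (nabla x) (dm (nabla x)) := by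
  apply isCompl_dm_of_disjoint
  rw [nabla, dm_dm, ← disjoint_assoc]
  exact (disjoint_ps x).mono_left (nabla_inf_dm_le x)

theorem nabla_inf_of_isCompl {e : A} (h : IsCompl e (dm e)) (x : A) :
    nabla (e ⊓ x) = e ⊓ nabla x := by
  rw [nabla_eq_sup, nabla_eq_sup, ps_inf_of_isCompl h, dm_sup, dm_dm, inf_sup_left]

end MpM

namespace CkStr

variable {k : ℕ} (T : CkStr A k)

theorem map_nabla (x : A) : T.t (nabla x) = nabla (T.t x) := by
  rw [nabla, nabla, T.map_dm, T.map_inf, T.map_dm, T.map_ps]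

/-- The cyclic negation `¬a = ⋁_{i=1}^{k} ∇∼tⁱ(a)`, introduced so that `a ⇁ b = ¬a ∨ b`. -/
def cyclicNeg (a : A) : A :=
  (Finset.Icc 1 k).sup fun i => nabla (dm (T.t^[i] a))

theorem rimp_eq_cyclicNeg_sup (a b : A) : rimp T a b = T.cyclicNeg a ⊔ b := rfl

theorem isCompl_cyclicNeg (a : A) : IsCompl (T.cyclicNeg a) (dm (T.cyclicNeg a)) :=
  isCompl_dm_finset_sup fun _ _ => isCompl_nabla _

theorem map_cyclicNeg (a : A) : T.t (T.cyclicNeg a) = T.cyclicNeg a := by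
  have hperiod : T.t^[k + 1] a = T.t^[1] a := by
    rw [Function.iterate_succ_apply', T.periodic, Function.iterate_one]
  calc T.t (T.cyclicNeg a)
      = (Finset.Icc 1 k).sup fun i => nabla (dm (T.t^[i + 1] a)) := by
        simp only [cyclicNeg, Finset.apply_sup_eq_sup_comp T.t T.map_sup T.map_bot,
          Function.comp_def, T.map_nabla, T.map_dm, Function.iterate_succ_apply']
    _ = T.cyclicNeg a :=
        sup_Icc_one_comp_add_one (f := fun i => nabla (dm (T.t^[i] a))) (by rw [hperiod])

theorem iterate_map_sup (i : ℕ) (x y : A) : T.t^[i] (x ⊔ y) = T.t^[i] x ⊔ T.t^[i] y :=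
  Function.Semiconj₂.iterate T.map_sup i x y

theorem cyclicNeg_cyclicNeg_sup (a b : A) :
    T.cyclicNeg (T.cyclicNeg a ⊔ b) = dm (T.cyclicNeg a) ⊓ T.cyclicNeg b := by
  have hterm (i : ℕ) : nabla (dm (T.t^[i] (T.cyclicNeg a ⊔ b))) =
      dm (T.cyclicNeg a) ⊓ nabla (dm (T.t^[i] b)) := by
    rw [iterate_map_sup, Function.iterate_fixed (T.map_cyclicNeg a), dm_sup,
      nabla_inf_of_isCompl (isCompl_dm_dm (T.isCompl_cyclicNeg a))]
  calc T.cyclicNeg (T.cyclicNeg a ⊔ b)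
      = (Finset.Icc 1 k).sup fun i => dm (T.cyclicNeg a) ⊓ nabla (dm (T.t^[i] b)) :=
        Finset.sup_congr rfl fun i _ => hterm i
    _ = dm (T.cyclicNeg a) ⊓ T.cyclicNeg b := (Finset.sup_inf_distrib_left ..).symm

end CkStr

theorem stmt7 {k : ℕ} (hk : 0 < k) (T : CkStr A k) (a b c : A) :
    rimp T a (rimp T b c) = rimp T (rimp T a b) (rimp T a c) := by
  simp only [T.rimp_eq_cyclicNeg_sup, T.cyclicNeg_cyclicNeg_sup]
  calc T.cyclicNeg a ⊔ (T.cyclicNeg b ⊔ c)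
      = (T.cyclicNeg b ⊔ T.cyclicNeg a) ⊔ c := by rw [sup_left_comm, sup_assoc]
    _ = (dm (T.cyclicNeg a) ⊓ T.cyclicNeg b ⊔ T.cyclicNeg a) ⊔ c := by
        rw [sup_inf_right, (T.isCompl_cyclicNeg a).symm.sup_eq_top, top_inf_eq]
    _ = dm (T.cyclicNeg a) ⊓ T.cyclicNeg b ⊔ (T.cyclicNeg a ⊔ c) := sup_assoc ..
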